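/- arXiv:1711.07925 — 6 statements merged into one kernel-verified Lean document; each statement's English description precedes it below -/
import Mathlib

section
/- Suppose M > 0. Define λ* = M and, for each mode n and each i : Fin (J n), p*^(n)_i = y^(n)_i / M. Then (λ*, p*) is a rank-one feasible point, and for every rank-one feasible point (λ, p) with λ > 0 and with p^(n)_{j_n} > 0 for every mode n and every index j satisfying Y_j > 0, one has L₁(λ*, p*) ≤ L₁(λ, p). (In L₁(λ*, p*), terms Y_j · log p*^(n)_{j_n} with Y_j = 0 contribute zero.) In other words, the KL principal component of a nonnegative tensor is given in closed form by λ = M and the normalized marginals of Y. -/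
/-- The scalar Gibbs inequality, coming from `log t ≤ t - 1`. -/
lemma mul_log_sub_mul_log_le {a b : ℝ} (ha : 0 ≤ a) (hb : 0 ≤ b) (hab : 0 < a → 0 < b) :
    a * Real.log b - a * Real.log a ≤ b - a := by
  rcases ha.eq_or_lt with rfl | ha
  · simpa using hb
  · have hb := hab ha
    calc a * Real.log b - a * Real.log a = a * Real.log (b / a) := by
          rw [Real.log_div hb.ne' ha.ne']; ring
      _ ≤ a * (b / a - 1) :=
          mul_le_mul_of_nonneg_left (Real.log_le_sub_one_of_pos (div_pos hb ha)) ha.le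
      _ = b - a := by field_simp

/-- The Gibbs inequality for nonnegative vectors of equal mass. -/
lemma sum_mul_log_le_sum_mul_log {ι : Type*} [Fintype ι] {q p : ι → ℝ}
    (hq : ∀ i, 0 ≤ q i) (hp : ∀ i, 0 ≤ p i) (hqp : ∀ i, 0 < q i → 0 < p i)
    (hsum : ∑ i, q i = ∑ i, p i) :
    ∑ i, q i * Real.log (p i) ≤ ∑ i, q i * Real.log (q i) := by
  have h := Finset.sum_le_sum fun i (_ : i ∈ Finset.univ) =>
    mul_log_sub_mul_log_le (hq i) (hp i) (hqp i)
  rw [Finset.sum_sub_distrib, Finset.sum_sub_distrib] at h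
  linarith

/-- Integrating a function of `g a` against `Y` is integrating against the pushforward. -/
lemma sum_pushforward_mul {α β : Type*} [Fintype α] [Fintype β] [DecidableEq β]
    (g : α → β) (Y : α → ℝ) (f : β → ℝ) :
    ∑ b, (∑ a, if g a = b then Y a else 0) * f b = ∑ a, Y a * f (g a) := by
  simp_rw [Finset.sum_mul]
  rw [Finset.sum_comm]
  simp [ite_mul]

/-- **KL principal component in closed form.**
The rank-one generalized KL approximation problem is solved by `λ* = M` and
`p*^(n) = y^(n)/M`, the normalized marginals of the nonnegative tensor `Y`. -/
theorem kl_principal_component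
    (N : ℕ) (hN : 1 ≤ N) (J : Fin N → ℕ) (hJ : ∀ n, 1 ≤ J n)
    (Y : (∀ n, Fin (J n)) → ℝ) (hY : ∀ j, 0 ≤ Y j)
    (M : ℝ) (hM : M = ∑ j : (∀ n, Fin (J n)), Y j) (hMpos : 0 < M)
    (y : ∀ n, Fin (J n) → ℝ)
    (hy : ∀ n i, y n i = ∑ j : (∀ m, Fin (J m)), if j n = i then Y j else 0)
    (L₁ : ℝ → (∀ n, Fin (J n) → ℝ) → ℝ)
    (hL₁ : ∀ lam p, L₁ lam p =
      -∑ j : (∀ n, Fin (J n)), Y j * (Real.log lam + ∑ n, Real.log (p n (j n))) + lam)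
    (lamStar : ℝ) (hlamStar : lamStar = M)
    (pStar : ∀ n, Fin (J n) → ℝ) (hpStar : ∀ n i, pStar n i = y n i / M) :
    (0 ≤ lamStar ∧ (∀ n i, 0 ≤ pStar n i) ∧ (∀ n, ∑ i, pStar n i = 1)) ∧
    (∀ (lam : ℝ) (p : ∀ n, Fin (J n) → ℝ),
      0 < lam → (∀ n i, 0 ≤ p n i) → (∀ n, ∑ i, p n i = 1) →
      (∀ (n : Fin N) (j : ∀ m, Fin (J m)), 0 < Y j → 0 < p n (j n)) →
      L₁ lamStar pStar ≤ L₁ lam p) := by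
  subst hlamStar
  have marginal (n : Fin N) (f : Fin (J n) → ℝ) : ∑ i, y n i * f i = ∑ j, Y j * f (j n) := by
    simp_rw [hy]
    exact sum_pushforward_mul (fun j : ∀ m, Fin (J m) => j n) Y f
  have hy_nonneg (n : Fin N) (i : Fin (J n)) : 0 ≤ y n i := by
    rw [hy]
    exact Finset.sum_nonneg fun j _ => by split_ifs <;> simp [hY]
  have hpStar_nonneg (n : Fin N) (i : Fin (J n)) : 0 ≤ pStar n i := by
    rw [hpStar]
    exact div_nonneg (hy_nonneg n i) hMpos.le
  have hpStar_sum (n : Fin N) : ∑ i, pStar n i = 1 := by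
    have h := marginal n fun _ => 1
    simp only [mul_one, ← hM] at h
    simp_rw [hpStar, ← Finset.sum_div, h]
    exact div_self hMpos.ne'
  have hy_eq (n : Fin N) (i : Fin (J n)) : y n i = lamStar * pStar n i := by
    rw [hpStar]
    field_simp
  have loss_eq (lam : ℝ) (p : ∀ n, Fin (J n) → ℝ) : L₁ lam p =
      -(lamStar * Real.log lam + ∑ n, lamStar * ∑ i, pStar n i * Real.log (p n i)) + lam := by
    simp_rw [hL₁, mul_add, Finset.sum_add_distrib, ← Finset.sum_mul, ← hM, Finset.mul_sum,
      ← mul_assoc, ← hy_eq, marginal]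
    rw [Finset.sum_comm]
  refine ⟨⟨hMpos.le, hpStar_nonneg, hpStar_sum⟩, fun lam p hlam hp hp_sum hpos => ?_⟩
  have hsupp (n : Fin N) (i : Fin (J n)) (hi : 0 < pStar n i) : 0 < p n i := by
    have hyi : 0 < y n i := by
      rw [hy_eq]
      exact mul_pos hMpos hi
    rw [hy] at hyi
    obtain ⟨j, -, hj⟩ := Finset.exists_ne_zero_of_sum_ne_zero hyi.ne'
    obtain ⟨rfl, hYj⟩ := ite_ne_right_iff.mp hj
    exact hpos n j ((hY j).lt_of_ne' hYj)
  have hscale := mul_log_sub_mul_log_le hMpos.le hlam.le fun _ => hlam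
  have hmodes : ∑ n, lamStar * ∑ i, pStar n i * Real.log (p n i) ≤
      ∑ n, lamStar * ∑ i, pStar n i * Real.log (pStar n i) :=
    Finset.sum_le_sum fun n _ => mul_le_mul_of_nonneg_left
      (sum_mul_log_le_sum_mul_log (hpStar_nonneg n) (hp n) (hsupp n)
        ((hpStar_sum n).trans (hp_sum n).symm)) hMpos.le
  rw [loss_eq, loss_eq]
  linarith
end

section
/- Suppose M > 0 and K ≥ 1. Let (λ*, P*) be a rank-K feasible point with ∑_k λ*_k > 0 and with ∑_k λ*_k ∏_n P*^(n)_{j_n k} > 0 for every index j with Y_j > 0, and suppose (λ*, P*) is a global minimizer of the rank-K generalized KL loss L over all rank-K feasible points (λ, P) satisfying ∑_k λ_k ∏_n P^(n)_{j_n k} > 0 for every j with Y_j > 0. Then ∑_k λ*_k = M, i.e., at optimality the sum of the diagonal loadings equals the total mass of the data tensor. -/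
/-- Scaling the argument of a weighted sum of logarithms by `c` shifts it by `log c` times the
total weight, as long as the arguments are positive wherever the weight is. -/
lemma sum_mul_log_const_mul {ι : Type*} [Fintype ι] {w x : ι → ℝ} (hw : ∀ i, 0 ≤ w i)
    (hx : ∀ i, 0 < w i → 0 < x i) {c : ℝ} (hc : c ≠ 0) :
    ∑ i, w i * Real.log (c * x i) = (∑ i, w i) * Real.log c + ∑ i, w i * Real.log (x i) := by
  rw [Finset.sum_mul, ← Finset.sum_add_distrib]
  refine Finset.sum_congr rfl fun i _ => ?_
  rcases (hw i).eq_or_lt with h | h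
  · simp [← h]
  · rw [Real.log_mul hc (hx i h).ne', mul_add]

/-- **Lemma (sum of diagonal loadings at optimality).**
At a global minimizer of the rank-`K` generalized KL loss, the sum of the
diagonal loadings equals the total mass `M` of the data tensor. -/
theorem sum_loadings_eq_mass_at_optimum
    (N : ℕ) (hN : 1 ≤ N) (J : Fin N → ℕ) (hJ : ∀ n, 1 ≤ J n)
    (Y : (∀ n, Fin (J n)) → ℝ) (hY : ∀ j, 0 ≤ Y j)
    (M : ℝ) (hM : M = ∑ j : (∀ n, Fin (J n)), Y j) (hMpos : 0 < M)
    (K : ℕ) (hK : 1 ≤ K)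
    (L : (Fin K → ℝ) → (∀ n, Fin (J n) → Fin K → ℝ) → ℝ)
    (hL : ∀ lam P, L lam P =
      -(∑ j : (∀ n, Fin (J n)),
          Y j * Real.log (∑ k, lam k * ∏ n, P n (j n) k)) + ∑ k, lam k)
    (lamStar : Fin K → ℝ) (PStar : ∀ n, Fin (J n) → Fin K → ℝ)
    (hlamStar : ∀ k, 0 ≤ lamStar k)
    (hPStar : ∀ n i k, 0 ≤ PStar n i k)
    (hPStarcol : ∀ n k, ∑ i, PStar n i k = 1)
    (hsum : 0 < ∑ k, lamStar k)
    (hpos : ∀ j : (∀ n, Fin (J n)), 0 < Y j →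
      0 < ∑ k, lamStar k * ∏ n, PStar n (j n) k)
    (hopt : ∀ (lam : Fin K → ℝ) (P : ∀ n, Fin (J n) → Fin K → ℝ),
      (∀ k, 0 ≤ lam k) → (∀ n i k, 0 ≤ P n i k) → (∀ n k, ∑ i, P n i k = 1) →
      (∀ j : (∀ n, Fin (J n)), 0 < Y j → 0 < ∑ k, lam k * ∏ n, P n (j n) k) →
      L lamStar PStar ≤ L lam P) :
    ∑ k, lamStar k = M := by
  set S := ∑ k, lamStar k with hS
  have hc : 0 < M / S := div_pos hMpos hsum
  have scale (j : ∀ n, Fin (J n)) : ∑ k, (M / S * lamStar k) * ∏ n, PStar n (j n) k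
      = M / S * ∑ k, lamStar k * ∏ n, PStar n (j n) k := by
    simp only [Finset.mul_sum, mul_assoc]
  have key := hopt (fun k => M / S * lamStar k) PStar
    (fun k => mul_nonneg hc.le (hlamStar k)) hPStar hPStarcol
    (fun j hj => by rw [scale]; exact mul_pos hc (hpos j hj))
  simp only [hL, scale] at key
  rw [sum_mul_log_const_mul hY hpos hc.ne', ← Finset.mul_sum, ← hS, ← hM,
    div_mul_cancel₀ M hsum.ne'] at key
  by_contra hne
  have hlog : Real.log (S / M) < S / M - 1 :=
    Real.log_lt_sub_one_of_pos (div_pos hsum hMpos) fun h => hne ((div_eq_one_iff_eq hMpos.ne').1 h)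
  have hmul := mul_lt_mul_of_pos_left hlog hMpos
  rw [← inv_div M S, Real.log_inv, inv_div, mul_sub, mul_div_cancel₀ S hMpos.ne'] at hmul
  linarith
end

section
/- Suppose M > 0 and K ≥ 1. Let (λ*, P*) be a rank-K feasible point with ∑_k λ*_k > 0 and with ∑_k λ*_k ∏_n P*^(n)_{j_n k} > 0 for every index j with Y_j > 0, and suppose (λ*, P*) globally minimizes the rank-K generalized KL loss L over all rank-K feasible points (λ, P) satisfying ∑_k λ_k ∏_n P^(n)_{j_n k} > 0 for every j with Y_j > 0. Define λ̄* = λ*/(∑_k λ*_k). Then (λ̄*, P*) globally minimizes the negative log-likelihood NLL over the normalized feasible set: for every λ̄ : Fin K → ℝ with λ̄ ≥ 0 and ∑_k λ̄_k = 1, and every column-stochastic nonnegative P, with ∑_k λ̄_k ∏_n P^(n)_{j_n k} > 0 for every j with Y_j > 0, one has NLL(λ̄*, P*) ≤ NLL(λ̄, P). That is, minimizing the generalized KL divergence is equivalent to maximum likelihood estimation in the multinomial latent variable model. -/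
/-- Scaling the mixture weights by `c > 0` shifts the weighted log-likelihood by
`(∑ j, Y j) * log c`. -/
theorem sum_mul_log_sum_smul {ι κ : Type*} [Fintype ι] [Fintype κ]
    (Y : ι → ℝ) (hY : ∀ j, 0 ≤ Y j) (w : κ → ℝ) (Q : ι → κ → ℝ)
    (hpos : ∀ j, 0 < Y j → 0 < ∑ k, w k * Q j k) {c : ℝ} (hc : 0 < c) :
    ∑ j, Y j * Real.log (∑ k, c * w k * Q j k) =
      (∑ j, Y j) * Real.log c + ∑ j, Y j * Real.log (∑ k, w k * Q j k) := by
  rw [Finset.sum_mul, ← Finset.sum_add_distrib]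
  refine Finset.sum_congr rfl fun j _ => ?_
  rcases (hY j).eq_or_lt with h | h
  · simp [← h]
  · simp_rw [mul_assoc, ← Finset.mul_sum]
    rw [Real.log_mul hc.ne' (hpos j h).ne', mul_add]

/-- **Equivalence of generalized KL fitting and maximum likelihood.**
If `(λ*, P*)` globally minimizes the rank-`K` generalized KL loss, then the
normalized point `(λ*/(∑ λ*), P*)` globally minimizes the negative
log-likelihood of the multinomial latent variable model. -/
theorem kl_minimizer_gives_ml_estimate
    (N : ℕ) (hN : 1 ≤ N) (J : Fin N → ℕ) (hJ : ∀ n, 1 ≤ J n)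
    (Y : (∀ n, Fin (J n)) → ℝ) (hY : ∀ j, 0 ≤ Y j)
    (M : ℝ) (hM : M = ∑ j : (∀ n, Fin (J n)), Y j) (hMpos : 0 < M)
    (K : ℕ) (hK : 1 ≤ K)
    (L : (Fin K → ℝ) → (∀ n, Fin (J n) → Fin K → ℝ) → ℝ)
    (hL : ∀ lam P, L lam P =
      -(∑ j : (∀ n, Fin (J n)),
          Y j * Real.log (∑ k, lam k * ∏ n, P n (j n) k)) + ∑ k, lam k)
    (NLL : (Fin K → ℝ) → (∀ n, Fin (J n) → Fin K → ℝ) → ℝ)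
    (hNLL : ∀ lamBar P, NLL lamBar P =
      -(∑ j : (∀ n, Fin (J n)),
          Y j * Real.log (∑ k, lamBar k * ∏ n, P n (j n) k)))
    (lamStar : Fin K → ℝ) (PStar : ∀ n, Fin (J n) → Fin K → ℝ)
    (hlamStar : ∀ k, 0 ≤ lamStar k)
    (hPStar : ∀ n i k, 0 ≤ PStar n i k)
    (hPStarcol : ∀ n k, ∑ i, PStar n i k = 1)
    (hsum : 0 < ∑ k, lamStar k)
    (hpos : ∀ j : (∀ n, Fin (J n)), 0 < Y j →
      0 < ∑ k, lamStar k * ∏ n, PStar n (j n) k)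
    (hopt : ∀ (lam : Fin K → ℝ) (P : ∀ n, Fin (J n) → Fin K → ℝ),
      (∀ k, 0 ≤ lam k) → (∀ n i k, 0 ≤ P n i k) → (∀ n k, ∑ i, P n i k = 1) →
      (∀ j : (∀ n, Fin (J n)), 0 < Y j → 0 < ∑ k, lam k * ∏ n, P n (j n) k) →
      L lamStar PStar ≤ L lam P)
    (lamBarStar : Fin K → ℝ)
    (hlamBarStar : ∀ k, lamBarStar k = lamStar k / (∑ κ, lamStar κ)) :
    ∀ (lamBar : Fin K → ℝ) (P : ∀ n, Fin (J n) → Fin K → ℝ),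
      (∀ k, 0 ≤ lamBar k) → (∑ k, lamBar k = 1) →
      (∀ n i k, 0 ≤ P n i k) → (∀ n k, ∑ i, P n i k = 1) →
      (∀ j : (∀ n, Fin (J n)), 0 < Y j → 0 < ∑ k, lamBar k * ∏ n, P n (j n) k) →
      NLL lamBarStar PStar ≤ NLL lamBar P := by
  intro lamBar P hlamBar hlamBarSum hP hPcol hPpos
  set S := ∑ k, lamStar k
  have hlamStar_eq : ∀ k, lamStar k = S * lamBarStar k := fun k => by
    rw [hlamBarStar, mul_div_cancel₀ _ hsum.ne']
  have hscale : ∀ (w : Fin K → ℝ) (Q : ∀ n, Fin (J n) → Fin K → ℝ) (j : ∀ n, Fin (J n)),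
      ∑ k, S * w k * ∏ n, Q n (j n) k = S * ∑ k, w k * ∏ n, Q n (j n) k := fun w Q j => by
    simp_rw [mul_assoc, ← Finset.mul_sum]
  have hposBar : ∀ j : (∀ n, Fin (J n)), 0 < Y j →
      0 < ∑ k, lamBarStar k * ∏ n, PStar n (j n) k := fun j hj => by
    have h := hpos j hj
    simp_rw [hlamStar_eq] at h
    rw [hscale] at h
    exact (mul_pos_iff_of_pos_left hsum).1 h
  have hle := hopt (fun k => S * lamBar k) P (fun k => mul_nonneg hsum.le (hlamBar k)) hP hPcol
    fun j hj => by
      rw [hscale]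
      exact mul_pos hsum (hPpos j hj)
  have hStarSum : ∑ j : (∀ n, Fin (J n)), Y j * Real.log (∑ k, lamStar k * ∏ n, PStar n (j n) k) =
      (∑ j, Y j) * Real.log S +
        ∑ j, Y j * Real.log (∑ k, lamBarStar k * ∏ n, PStar n (j n) k) := by
    rw [← sum_mul_log_sum_smul Y hY lamBarStar (fun j k => ∏ n, PStar n (j n) k) hposBar hsum]
    simp_rw [← hlamStar_eq]
  rw [hL, hL, hStarSum,
    sum_mul_log_sum_smul Y hY lamBar (fun j k => ∏ n, P n (j n) k) hPpos hsum,
    ← Finset.mul_sum, hlamBarSum] at hle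
  rw [hNLL, hNLL]
  linarith
end

section
/- Let K ≥ 1 and let (λᵗ, Pᵗ) be a rank-K feasible point with λᵗ_k > 0 for all k and Pᵗ^(n)_{i k} > 0 for all n, i, k. Define Ψ_{j k} = λᵗ_k ∏_n Pᵗ^(n)_{j_n k} / (∑_κ λᵗ_κ ∏_n Pᵗ^(n)_{j_n κ}) for each index j and each k, and define the surrogate G(λ, P) = -∑_j Y_j ∑_k Ψ_{j k} ( log λ_k + ∑_n log P^(n)_{j_n k} − log Ψ_{j k} ) + ∑_k λ_k. Then: (i) for every rank-K feasible point (λ, P) with λ_k > 0 for all k and P^(n)_{i k} > 0 for all n, i, k, one has L(λ, P) ≤ G(λ, P); and (ii) G(λᵗ, Pᵗ) = L(λᵗ, Pᵗ), i.e., the surrogate majorizes the generalized KL loss and is tight at the current iterate. -/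
/-- Jensen's inequality for the logarithm, in its evidence-lower-bound form. -/
theorem sum_mul_log_sub_log_le_log_sum {ι : Type*} [Fintype ι] {w x : ι → ℝ}
    (hw : ∀ k, 0 < w k) (hw1 : ∑ k, w k = 1) (hx : ∀ k, 0 < x k) :
    ∑ k, w k * (Real.log (x k) - Real.log (w k)) ≤ Real.log (∑ k, x k) := by
  have h := strictConcaveOn_log_Ioi.concaveOn.le_map_sum (t := Finset.univ) (w := w)
    (p := fun k => x k / w k) (fun k _ => (hw k).le) hw1 (fun k _ => div_pos (hx k) (hw k))
  simpa only [smul_eq_mul, Real.log_div (hx _).ne' (hw _).ne',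
    mul_div_cancel₀ _ (hw _).ne'] using h

/-- The evidence lower bound is attained at the normalized weights. -/
theorem sum_mul_log_sub_log_eq_log_sum {ι : Type*} [Fintype ι] {w x : ι → ℝ}
    (hw1 : ∑ k, w k = 1) (hx : ∀ k, 0 < x k) (hS : 0 < ∑ k, x k)
    (hw : ∀ k, w k = x k / ∑ κ, x κ) :
    ∑ k, w k * (Real.log (x k) - Real.log (w k)) = Real.log (∑ k, x k) := by
  have h : ∀ k, Real.log (x k) - Real.log (w k) = Real.log (∑ κ, x κ) := fun k => by
    rw [hw k, Real.log_div (hx k).ne' hS.ne', sub_sub_cancel]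
  simp only [h, ← Finset.sum_mul, hw1, one_mul]

/-- **Majorization of the generalized KL loss by the EM surrogate.**
The surrogate `G` built from the posterior weights `Ψ` at the current iterate
`(λᵗ, Pᵗ)` upper-bounds the rank-`K` generalized KL loss `L` on strictly
positive feasible points, and is tight at `(λᵗ, Pᵗ)`. -/
theorem surrogate_majorizes_kl_loss
    (N : ℕ) (hN : 1 ≤ N) (J : Fin N → ℕ) (hJ : ∀ n, 1 ≤ J n)
    (Y : (∀ n, Fin (J n)) → ℝ) (hY : ∀ j, 0 ≤ Y j)
    (K : ℕ) (hK : 1 ≤ K)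
    (L : (Fin K → ℝ) → (∀ n, Fin (J n) → Fin K → ℝ) → ℝ)
    (hL : ∀ lam P, L lam P =
      -(∑ j : (∀ n, Fin (J n)),
          Y j * Real.log (∑ k, lam k * ∏ n, P n (j n) k)) + ∑ k, lam k)
    (lamT : Fin K → ℝ) (PT : ∀ n, Fin (J n) → Fin K → ℝ)
    (hlamT : ∀ k, 0 < lamT k)
    (hPT : ∀ n i k, 0 < PT n i k)
    (hPTcol : ∀ n k, ∑ i, PT n i k = 1)
    (Ψ : (∀ n, Fin (J n)) → Fin K → ℝ)
    (hΨ : ∀ j k, Ψ j k =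
      lamT k * (∏ n, PT n (j n) k) / (∑ κ, lamT κ * ∏ n, PT n (j n) κ))
    (G : (Fin K → ℝ) → (∀ n, Fin (J n) → Fin K → ℝ) → ℝ)
    (hG : ∀ lam P, G lam P =
      -(∑ j : (∀ n, Fin (J n)), Y j * ∑ k, Ψ j k *
          (Real.log (lam k) + (∑ n, Real.log (P n (j n) k)) - Real.log (Ψ j k)))
        + ∑ k, lam k) :
    (∀ (lam : Fin K → ℝ) (P : ∀ n, Fin (J n) → Fin K → ℝ),
      (∀ k, 0 < lam k) → (∀ n i k, 0 < P n i k) → (∀ n k, ∑ i, P n i k = 1) →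
      L lam P ≤ G lam P) ∧
    G lamT PT = L lamT PT := by
  have : Nonempty (Fin K) := ⟨⟨0, hK⟩⟩
  have hpos : ∀ (lam : Fin K → ℝ) (P : ∀ n, Fin (J n) → Fin K → ℝ),
      (∀ k, 0 < lam k) → (∀ n i k, 0 < P n i k) →
      ∀ (j : ∀ n, Fin (J n)) k, 0 < lam k * ∏ n, P n (j n) k :=
    fun lam P hlam hP j k => mul_pos (hlam k) (Finset.prod_pos fun n _ => hP n (j n) k)
  have hlog : ∀ (lam : Fin K → ℝ) (P : ∀ n, Fin (J n) → Fin K → ℝ),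
      (∀ k, 0 < lam k) → (∀ n i k, 0 < P n i k) → ∀ (j : ∀ n, Fin (J n)) k,
      Real.log (lam k) + ∑ n, Real.log (P n (j n) k)
        = Real.log (lam k * ∏ n, P n (j n) k) := fun lam P hlam hP j k => by
    rw [Real.log_mul (hlam k).ne' (Finset.prod_pos fun n _ => hP n (j n) k).ne',
      Real.log_prod fun n _ => (hP n (j n) k).ne']
  have hxT := hpos lamT PT hlamT hPT
  have hS : ∀ j : (∀ n, Fin (J n)), 0 < ∑ k, lamT k * ∏ n, PT n (j n) k :=
    fun j => Finset.sum_pos (fun k _ => hxT j k) Finset.univ_nonempty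
  have hΨpos : ∀ j k, 0 < Ψ j k := fun j k => by
    rw [hΨ]
    exact div_pos (hxT j k) (hS j)
  have hΨsum : ∀ j, ∑ k, Ψ j k = 1 := fun j => by
    simp only [hΨ, ← Finset.sum_div]
    exact div_self (hS j).ne'
  constructor
  · intro lam P hlam hP _
    rw [hL, hG]
    gcongr with j
    · exact hY j
    · simp only [hlog lam P hlam hP]
      exact sum_mul_log_sub_log_le_log_sum (hΨpos j) (hΨsum j) (hpos lam P hlam hP j)
  · rw [hL, hG]
    simp only [hlog lamT PT hlamT hPT]
    congr 2
    refine Finset.sum_congr rfl fun j _ => ?_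
    rw [sum_mul_log_sub_log_eq_log_sum (hΨsum j) (hxT j) (hS j) (hΨ j)]
end

section
/- Let K ≥ 1 and let (λᵗ, Pᵗ) be a rank-K feasible point with λᵗ_k > 0 for all k and Pᵗ^(n)_{i k} > 0 for all n, i, k. Define Ψ_{j k} = λᵗ_k ∏_n Pᵗ^(n)_{j_n k} / (∑_κ λᵗ_κ ∏_n Pᵗ^(n)_{j_n κ}), the component masses M_k = ∑_j Y_j Ψ_{j k}, and the weighted marginals y^(n)_{i k} = ∑_{j : j_n = i} Y_j Ψ_{j k}. Assume M_k > 0 for all k. Then the EM update λ⁺_k = M_k, P⁺^(n)_{i k} = y^(n)_{i k} / M_k is a rank-K feasible point, and it minimizes the surrogate: G(λ⁺, P⁺) ≤ G(λ, P) for every rank-K feasible point (λ, P) with λ_k > 0 for all k and with P^(n)_{i k} > 0 whenever y^(n)_{i k} > 0. (In G(λ⁺, P⁺), terms with weight Y_j Ψ_{j k} = 0 contribute zero.) -/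
/-- Tangent-line bound for the logarithm, weighted by `a` and scaled by `M`. -/
lemma mul_log_le_mul_log_div_add {a M p : ℝ} (ha : 0 ≤ a) (hM : 0 < M) (hp : 0 ≤ p)
    (hap : 0 < a → 0 < p) :
    a * Real.log p ≤ a * Real.log (a / M) + (M * p - a) := by
  rcases ha.eq_or_lt with rfl | ha
  · simpa using mul_nonneg hM.le hp
  · have hp := hap ha
    have hlog := Real.log_le_sub_one_of_pos (show 0 < p / (a / M) by positivity)
    rw [Real.log_div hp.ne' (by positivity)] at hlog
    have hmul := mul_le_mul_of_nonneg_left hlog ha.le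
    have hcancel : a * (p / (a / M) - 1) = M * p - a := by field_simp
    linarith

/-- Summing a function against the marginal of a weight `w` along a map `g`. -/
lemma sum_marginal_mul {α ι : Type*} [Fintype α] [Fintype ι] [DecidableEq ι]
    (w : α → ℝ) (g : α → ι) (f : ι → ℝ) :
    ∑ i, (∑ j, if g j = i then w j else 0) * f i = ∑ j, w j * f (g j) := by
  simp_rw [Finset.sum_mul]
  rw [Finset.sum_comm]
  simp [ite_mul]

/-- Gibbs' inequality: the normalized weights `a i / M` maximize the weighted log-likelihood. -/
lemma sum_mul_log_le_sum_mul_log_div {ι : Type*} [Fintype ι] {a p : ι → ℝ} {M : ℝ}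
    (ha : ∀ i, 0 ≤ a i) (hM : 0 < M) (hsum : ∑ i, a i = M) (hp : ∀ i, 0 ≤ p i)
    (hp_sum : ∑ i, p i = 1) (hap : ∀ i, 0 < a i → 0 < p i) :
    ∑ i, a i * Real.log (p i) ≤ ∑ i, a i * Real.log (a i / M) := by
  have h := Finset.sum_le_sum fun i (_ : i ∈ Finset.univ) =>
    mul_log_le_mul_log_div_add (ha i) hM (hp i) (hap i)
  rw [Finset.sum_add_distrib, Finset.sum_sub_distrib, ← Finset.mul_sum, hp_sum, hsum] at h
  linarith

/-- **The EM update minimizes the surrogate.**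
Given posterior weights `Ψ` at a strictly positive feasible iterate `(λᵗ, Pᵗ)`,
the EM update `λ⁺ = M_k`, `P⁺^(n)_{ik} = y^(n)_{ik}/M_k` is feasible and
minimizes the surrogate `G` over the (suitably positive) feasible set. -/
theorem em_update_minimizes_surrogate
    (N : ℕ) (hN : 1 ≤ N) (J : Fin N → ℕ) (hJ : ∀ n, 1 ≤ J n)
    (Y : (∀ n, Fin (J n)) → ℝ) (hY : ∀ j, 0 ≤ Y j)
    (hYsum : 0 < ∑ j : (∀ n, Fin (J n)), Y j)
    (K : ℕ) (hK : 1 ≤ K)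
    (lamT : Fin K → ℝ) (PT : ∀ n, Fin (J n) → Fin K → ℝ)
    (hlamT : ∀ k, 0 < lamT k)
    (hPT : ∀ n i k, 0 < PT n i k)
    (hPTcol : ∀ n k, ∑ i, PT n i k = 1)
    (Ψ : (∀ n, Fin (J n)) → Fin K → ℝ)
    (hΨ : ∀ j k, Ψ j k =
      lamT k * (∏ n, PT n (j n) k) / (∑ κ, lamT κ * ∏ n, PT n (j n) κ))
    (G : (Fin K → ℝ) → (∀ n, Fin (J n) → Fin K → ℝ) → ℝ)
    (hG : ∀ lam P, G lam P =
      -(∑ j : (∀ n, Fin (J n)), Y j * ∑ k, Ψ j k *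
          (Real.log (lam k) + (∑ n, Real.log (P n (j n) k)) - Real.log (Ψ j k)))
        + ∑ k, lam k)
    (Mk : Fin K → ℝ)
    (hMk : ∀ k, Mk k = ∑ j : (∀ n, Fin (J n)), Y j * Ψ j k)
    (hMkpos : ∀ k, 0 < Mk k)
    (y : ∀ n, Fin (J n) → Fin K → ℝ)
    (hy : ∀ n i k, y n i k =
      ∑ j : (∀ m, Fin (J m)), if j n = i then Y j * Ψ j k else 0)
    (lamP : Fin K → ℝ) (hlamP : ∀ k, lamP k = Mk k)
    (PP : ∀ n, Fin (J n) → Fin K → ℝ)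
    (hPP : ∀ n i k, PP n i k = y n i k / Mk k) :
    ((∀ k, 0 ≤ lamP k) ∧ (∀ n i k, 0 ≤ PP n i k) ∧ (∀ n k, ∑ i, PP n i k = 1)) ∧
    (∀ (lam : Fin K → ℝ) (P : ∀ n, Fin (J n) → Fin K → ℝ),
      (∀ k, 0 ≤ lam k) → (∀ n i k, 0 ≤ P n i k) → (∀ n k, ∑ i, P n i k = 1) →
      (∀ k, 0 < lam k) →
      (∀ n i k, 0 < y n i k → 0 < P n i k) →
      G lamP PP ≤ G lam P) := by
  have hΨ_nonneg : ∀ j k, 0 ≤ Ψ j k := fun j k => by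
    rw [hΨ]
    exact div_nonneg (mul_nonneg (hlamT k).le (Finset.prod_nonneg fun n _ => (hPT n _ k).le))
      (Finset.sum_nonneg fun κ _ =>
        mul_nonneg (hlamT κ).le (Finset.prod_nonneg fun n _ => (hPT n _ κ).le))
  have hy_nonneg : ∀ n i k, 0 ≤ y n i k := fun n i k => by
    rw [hy]
    refine Finset.sum_nonneg fun j _ => ?_
    split_ifs
    · exact mul_nonneg (hY j) (hΨ_nonneg j k)
    · exact le_rfl
  have hy_mul : ∀ n k (f : Fin (J n) → ℝ),
      ∑ i, y n i k * f i = ∑ j : (∀ m, Fin (J m)), Y j * Ψ j k * f (j n) := fun n k f => by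
    simp_rw [hy]
    exact sum_marginal_mul (fun j => Y j * Ψ j k) (fun j => j n) f
  have hy_sum : ∀ n k, ∑ i, y n i k = Mk k := fun n k => by
    simpa [hMk] using hy_mul n k fun _ => 1
  have hG_split : ∀ lam P, G lam P =
      ∑ k, ((lam k - Mk k * Real.log (lam k)) - (∑ n, ∑ i, y n i k * Real.log (P n i k))
        + ∑ j : (∀ n, Fin (J n)), Y j * Ψ j k * Real.log (Ψ j k)) := fun lam P => by
    have hk : ∀ k, ∑ j : (∀ n, Fin (J n)), Y j * (Ψ j k *
          (Real.log (lam k) + (∑ n, Real.log (P n (j n) k)) - Real.log (Ψ j k))) =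
        Mk k * Real.log (lam k) + (∑ n, ∑ i, y n i k * Real.log (P n i k))
          - ∑ j : (∀ n, Fin (J n)), Y j * Ψ j k * Real.log (Ψ j k) := fun k => by
      simp_rw [hy_mul _ k fun i => Real.log (P _ i k)]
      rw [hMk, Finset.sum_mul, Finset.sum_comm (s := (Finset.univ : Finset (Fin N))),
        ← Finset.sum_add_distrib, ← Finset.sum_sub_distrib]
      refine Finset.sum_congr rfl fun j _ => ?_
      rw [← Finset.mul_sum]
      ring
    rw [hG]
    simp_rw [Finset.mul_sum (Finset.univ : Finset (Fin K))]
    rw [Finset.sum_comm, ← Finset.sum_neg_distrib, ← Finset.sum_add_distrib]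
    refine Finset.sum_congr rfl fun k _ => ?_
    rw [hk]
    ring
  refine ⟨⟨fun k => ?_, fun n i k => ?_, fun n k => ?_⟩, ?_⟩
  · rw [hlamP]
    exact (hMkpos k).le
  · rw [hPP]
    exact div_nonneg (hy_nonneg n i k) (hMkpos k).le
  · simp_rw [hPP]
    rw [← Finset.sum_div, hy_sum, div_self (hMkpos k).ne']
  · intro lam P hlam hP hPcol hlam_pos hP_pos
    rw [hG_split, hG_split]
    refine Finset.sum_le_sum fun k _ => ?_
    have hmass := mul_log_le_mul_log_div_add (hMkpos k).le one_pos (hlam k) fun _ => hlam_pos k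
    have hfactor : ∑ n, ∑ i, y n i k * Real.log (P n i k) ≤
        ∑ n, ∑ i, y n i k * Real.log (PP n i k) := by
      refine Finset.sum_le_sum fun n _ => ?_
      simp_rw [hPP]
      exact sum_mul_log_le_sum_mul_log_div (fun i => hy_nonneg n i k) (hMkpos k) (hy_sum n k)
        (fun i => hP n i k) (hPcol n k) fun i => hP_pos n i k
    rw [div_one] at hmass
    rw [hlamP]
    linarith
end

section
/- Let K ≥ 1 and let (λᵗ, Pᵗ) be a rank-K feasible point with λᵗ_k > 0 for all k and Pᵗ^(n)_{i k} > 0 for all n, i, k. Define Ψ_{j k} = λᵗ_k ∏_n Pᵗ^(n)_{j_n k} / (∑_κ λᵗ_κ ∏_n Pᵗ^(n)_{j_n κ}), M_k = ∑_j Y_j Ψ_{j k}, and y^(n)_{i k} = ∑_{j : j_n = i} Y_j Ψ_{j k}, and assume M_k > 0 for all k. Then the EM update λ⁺_k = M_k, P⁺^(n)_{i k} = y^(n)_{i k} / M_k does not increase the generalized KL loss: L(λ⁺, P⁺) ≤ L(λᵗ, Pᵗ). -/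
open Finset

/-- Pointwise form of Gibbs' inequality. -/
lemma sub_le_mul_log_sub_log {u v : ℝ} (hu : 0 ≤ u) (hv : 0 < v) :
    u - v ≤ u * (Real.log u - Real.log v) := by
  rcases hu.eq_or_lt with rfl | hu
  · simpa using hv.le
  · have h := Real.log_le_sub_one_of_pos (div_pos hv hu)
    rw [Real.log_div hv.ne' hu.ne'] at h
    have h' := mul_le_mul_of_nonneg_left h hu.le
    have h'' : u * (v / u - 1) = v - u := by field_simp
    linarith

/-- The log-sum inequality (Jensen's inequality for `log`) in normalized form. -/
lemma sum_div_mul_log_sub_log_le {ι : Type*} [Fintype ι] [Nonempty ι] {a b : ι → ℝ}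
    (ha : ∀ k, 0 < a k) (hb : ∀ k, 0 < b k) :
    ∑ k, a k / (∑ κ, a κ) * (Real.log (b k) - Real.log (a k)) ≤
      Real.log (∑ k, b k) - Real.log (∑ k, a k) := by
  have hA : 0 < ∑ k, a k := sum_pos (fun k _ => ha k) univ_nonempty
  have hB : 0 < ∑ k, b k := sum_pos (fun k _ => hb k) univ_nonempty
  have hA1 : ∑ k, a k / (∑ κ, a κ) = 1 := by rw [← sum_div, div_self hA.ne']
  have hB1 : ∑ k, b k / (∑ κ, b κ) = 1 := by rw [← sum_div, div_self hB.ne']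
  have h : ∑ k, (a k / (∑ κ, a κ) - b k / (∑ κ, b κ)) ≤
      ∑ k, (a k / (∑ κ, a κ) * (Real.log (∑ κ, b κ) - Real.log (∑ κ, a κ)) -
        a k / (∑ κ, a κ) * (Real.log (b k) - Real.log (a k))) := by
    refine sum_le_sum fun k _ => ?_
    have := sub_le_mul_log_sub_log (div_pos (ha k) hA).le (div_pos (hb k) hB)
    rw [Real.log_div (ha k).ne' hA.ne', Real.log_div (hb k).ne' hB.ne'] at this
    linarith
  rw [sum_sub_distrib, sum_sub_distrib, hA1, hB1, ← sum_mul, hA1] at h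
  linarith

/-- A weighted sum of a function of `f j` only depends on the weights of the fibers of `f`. -/
lemma sum_mul_comp_eq_sum_fiber_mul {ι κ : Type*} [Fintype ι] [Fintype κ] [DecidableEq κ]
    (f : ι → κ) (w : ι → ℝ) (g : κ → ℝ) :
    ∑ j, w j * g (f j) = ∑ i, (∑ j, if f j = i then w j else 0) * g i := by
  simp_rw [sum_mul]
  rw [sum_comm]
  refine sum_congr rfl fun j _ => ?_
  simp [ite_mul]

/-- Gibbs' inequality for the normalization `y / m` of nonnegative weights `y` of total mass `m`
against a positive probability vector `p`. -/
lemma sum_mul_log_normalize_sub_log_nonneg {ι : Type*} [Fintype ι] {y p : ι → ℝ} {m : ℝ}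
    (hm : 0 < m) (hy : ∀ i, 0 ≤ y i) (hysum : ∑ i, y i = m)
    (hp : ∀ i, 0 < p i) (hpsum : ∑ i, p i = 1) :
    0 ≤ ∑ i, y i * (Real.log (y i / m) - Real.log (p i)) := by
  calc (0 : ℝ) = m * ∑ i, (y i / m - p i) := by
        rw [sum_sub_distrib, ← sum_div, hysum, hpsum, div_self hm.ne']; simp
    _ ≤ m * ∑ i, y i / m * (Real.log (y i / m) - Real.log (p i)) :=
        mul_le_mul_of_nonneg_left
          (sum_le_sum fun i _ => sub_le_mul_log_sub_log (div_nonneg (hy i) hm.le) (hp i)) hm.le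
    _ = _ := by
        rw [mul_sum]
        refine sum_congr rfl fun i _ => ?_
        field_simp

/-- Logarithm of a positive weight times a product of positive factors. -/
lemma log_mul_prod {ι : Type*} [Fintype ι] {c : ℝ} {p : ι → ℝ} (hc : 0 < c) (hp : ∀ n, 0 < p n) :
    Real.log (c * ∏ n, p n) = Real.log c + ∑ n, Real.log (p n) := by
  rw [Real.log_mul hc.ne' (prod_pos fun n _ => hp n).ne', Real.log_prod fun n _ => (hp n).ne']

/-- **Monotonicity of the EM iteration for generalized KL fitting.**
The EM update computed from the posterior weights `Ψ` at a strictly positive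
feasible iterate `(λᵗ, Pᵗ)` does not increase the rank-`K` generalized KL
loss: `L(λ⁺, P⁺) ≤ L(λᵗ, Pᵗ)`. -/
theorem em_update_does_not_increase_kl_loss
    (N : ℕ) (hN : 1 ≤ N) (J : Fin N → ℕ) (hJ : ∀ n, 1 ≤ J n)
    (Y : (∀ n, Fin (J n)) → ℝ) (hY : ∀ j, 0 ≤ Y j)
    (hYsum : 0 < ∑ j : (∀ n, Fin (J n)), Y j)
    (K : ℕ) (hK : 1 ≤ K)
    (L : (Fin K → ℝ) → (∀ n, Fin (J n) → Fin K → ℝ) → ℝ)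
    (hL : ∀ lam P, L lam P =
      -(∑ j : (∀ n, Fin (J n)),
          Y j * Real.log (∑ k, lam k * ∏ n, P n (j n) k)) + ∑ k, lam k)
    (lamT : Fin K → ℝ) (PT : ∀ n, Fin (J n) → Fin K → ℝ)
    (hlamT : ∀ k, 0 < lamT k)
    (hPT : ∀ n i k, 0 < PT n i k)
    (hPTcol : ∀ n k, ∑ i, PT n i k = 1)
    (Ψ : (∀ n, Fin (J n)) → Fin K → ℝ)
    (hΨ : ∀ j k, Ψ j k =
      lamT k * (∏ n, PT n (j n) k) / (∑ κ, lamT κ * ∏ n, PT n (j n) κ))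
    (Mk : Fin K → ℝ)
    (hMk : ∀ k, Mk k = ∑ j : (∀ n, Fin (J n)), Y j * Ψ j k)
    (hMkpos : ∀ k, 0 < Mk k)
    (y : ∀ n, Fin (J n) → Fin K → ℝ)
    (hy : ∀ n i k, y n i k =
      ∑ j : (∀ m, Fin (J m)), if j n = i then Y j * Ψ j k else 0)
    (lamP : Fin K → ℝ) (hlamP : ∀ k, lamP k = Mk k)
    (PP : ∀ n, Fin (J n) → Fin K → ℝ)
    (hPP : ∀ n i k, PP n i k = y n i k / Mk k) :
    L lamP PP ≤ L lamT PT := by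
  have : Nonempty (Fin K) := ⟨⟨0, hK⟩⟩
  have haT : ∀ (j : ∀ n, Fin (J n)) k, 0 < lamT k * ∏ n, PT n (j n) k := fun j k =>
    mul_pos (hlamT k) (prod_pos fun n _ => hPT n _ k)
  have hΨpos : ∀ j k, 0 < Ψ j k := fun j k => by
    rw [hΨ]
    exact div_pos (haT j k) (sum_pos (fun κ _ => haT j κ) univ_nonempty)
  have hw : ∀ j k, 0 ≤ Y j * Ψ j k := fun j k => mul_nonneg (hY j) (hΨpos j k).le
  have hterm : ∀ n i k (j : ∀ m, Fin (J m)), 0 ≤ if j n = i then Y j * Ψ j k else 0 :=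
    fun n i k j => by
      split_ifs
      exacts [hw j k, le_rfl]
  have hynonneg : ∀ n i k, 0 ≤ y n i k := fun n i k => by
    rw [hy]
    exact sum_nonneg fun j _ => hterm n i k j
  have hysum : ∀ n k, ∑ i, y n i k = Mk k := fun n k => by
    simpa [hy, hMk] using
      (sum_mul_comp_eq_sum_fiber_mul (fun j : (∀ m, Fin (J m)) => j n)
        (fun j => Y j * Ψ j k) (fun _ => 1)).symm
  have hPPpos : ∀ j : (∀ n, Fin (J n)), 0 < Y j → ∀ n k, 0 < PP n (j n) k := fun j hj n k => by
    rw [hPP, hy]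
    refine div_pos (lt_of_lt_of_le (mul_pos hj (hΨpos j k)) ?_) (hMkpos k)
    simpa using single_le_sum (fun j' _ => hterm n (j n) k j') (mem_univ j)
  have hjensen : ∀ j : (∀ n, Fin (J n)), ∑ k, Y j * Ψ j k * ((Real.log (Mk k) - Real.log (lamT k)) +
        ∑ n, (Real.log (PP n (j n) k) - Real.log (PT n (j n) k))) ≤
      Y j * Real.log (∑ k, lamP k * ∏ n, PP n (j n) k) -
        Y j * Real.log (∑ k, lamT k * ∏ n, PT n (j n) k) := fun j => by
    rcases (hY j).eq_or_lt with h0 | hj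
    · simp [← h0]
    · have h := mul_le_mul_of_nonneg_left (sum_div_mul_log_sub_log_le (haT j)
        (b := fun k => lamP k * ∏ n, PP n (j n) k) fun k =>
          mul_pos (hlamP k ▸ hMkpos k) (prod_pos fun n _ => hPPpos j hj n k)) hj.le
      rw [mul_sub] at h
      refine le_trans (le_of_eq ?_) h
      rw [mul_sum]
      refine sum_congr rfl fun k _ => ?_
      rw [log_mul_prod (hlamP k ▸ hMkpos k) fun n => hPPpos j hj n k,
        log_mul_prod (hlamT k) fun n => hPT n _ k, ← hΨ, hlamP, sum_sub_distrib]
      ring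
  have hswap : ∑ j : (∀ n, Fin (J n)), ∑ k, Y j * Ψ j k * ((Real.log (Mk k) - Real.log (lamT k)) +
        ∑ n, (Real.log (PP n (j n) k) - Real.log (PT n (j n) k))) =
      ∑ k, (Mk k * (Real.log (Mk k) - Real.log (lamT k)) +
        ∑ n, ∑ i, y n i k * (Real.log (y n i k / Mk k) - Real.log (PT n i k))) := by
    rw [sum_comm]
    refine sum_congr rfl fun k _ => ?_
    simp_rw [mul_add, sum_add_distrib, ← sum_mul, ← hMk, mul_sum]
    rw [sum_comm]
    congr 1
    refine sum_congr rfl fun n _ => ?_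
    simp_rw [← hPP, hy]
    exact sum_mul_comp_eq_sum_fiber_mul (fun j : (∀ m, Fin (J m)) => j n)
      (fun j => Y j * Ψ j k) (fun i => Real.log (PP n i k) - Real.log (PT n i k))
  have hgibbs : ∑ k, (Mk k - lamT k) ≤
      ∑ k, (Mk k * (Real.log (Mk k) - Real.log (lamT k)) +
        ∑ n, ∑ i, y n i k * (Real.log (y n i k / Mk k) - Real.log (PT n i k))) :=
    sum_le_sum fun k _ => le_add_of_le_of_nonneg
      (sub_le_mul_log_sub_log (hMkpos k).le (hlamT k))
      (sum_nonneg fun n _ => sum_mul_log_normalize_sub_log_nonneg (hMkpos k)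
        (fun i => hynonneg n i k) (hysum n k) (fun i => hPT n i k) (hPTcol n k))
  have htotal := sum_le_sum fun j (_ : j ∈ univ) => hjensen j
  rw [hswap, sum_sub_distrib] at htotal
  rw [sum_sub_distrib] at hgibbs
  rw [hL, hL, sum_congr rfl fun k _ => hlamP k]
  linarith
end
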